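/- Let S be a finite set of size s ≥ 1 and C a nonempty subset of S. Then the sum of μ(ρ, {S}) over all set partitions ρ of S that contain C as a block equals (-1)^(s - |C|). -/

import Mathlib

open scoped BigOperators

theorem aux_bij {S : Type*} [DecidableEq S] [∀ s : Finset S, Fintype (Finpartition s)]
    (T B : Finset S) (hB : B.Nonempty) (hBT : B ⊆ T) (f : ℕ → ℤ) :
    ∑ ρ : Finpartition T with B ∈ ρ.parts, f ρ.parts.card =
      ∑ σ : Finpartition (T \ B), f (σ.parts.card + 1) := by
  symm
  have hne : B ≠ ⊥ := hB.ne_empty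
  have hd : Disjoint (T \ B) B := Finset.sdiff_disjoint
  have hs : (T \ B) ⊔ B = T := Finset.sdiff_union_of_subset hBT
  have hnot : ∀ σ : Finpartition (T \ B), B ∉ σ.parts := by
    intro σ h
    have h1 := σ.le h
    obtain ⟨x, hx⟩ := hB
    have := h1 hx
    simp [hx] at this
  refine Finset.sum_bij (fun σ _ => σ.extend hne hd hs) ?_ ?_ ?_ ?_
  · intro σ _
    simp [Finpartition.extend]
  · intro σ _ τ _ h
    have h2 : insert B σ.parts = insert B τ.parts := congrArg Finpartition.parts h
    have h3 := congrArg (fun s => Finset.erase s B) h2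
    simp only [Finset.erase_insert (hnot _)] at h3
    exact Finpartition.ext h3
  · intro π hπ
    have hm : B ∈ π.parts := by simpa using hπ
    refine ⟨π.ofSubset (Finset.erase_subset B _) ?_, Finset.mem_univ _, ?_⟩
    · ext x
      simp only [Finset.mem_sup, Finset.mem_sdiff, Finset.mem_erase, id]
      constructor
      · rintro ⟨t, ⟨h1, h2⟩, hx⟩
        exact ⟨π.subset h2 hx, fun hxB => h1 (π.eq_of_mem_parts h2 hm hx hxB)⟩
      · rintro ⟨hx, hxB⟩
        obtain ⟨t, ht, hxt⟩ := π.exists_mem hx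
        exact ⟨t, ⟨fun h => hxB (h ▸ hxt), ht⟩, hxt⟩
    · apply Finpartition.ext
      exact Finset.insert_erase hm
  · intro σ _
    rw [Finpartition.card_extend]

theorem aux_sum {S : Type*} [DecidableEq S] [∀ s : Finset S, Fintype (Finpartition s)]
    (T : Finset S) :
    ∑ ρ : Finpartition T, ((-1 : ℤ) ^ ρ.parts.card * ρ.parts.card.factorial) =
      (-1) ^ T.card := by
  induction T using Finset.strongInduction with
  | H T ih =>
  rcases T.eq_empty_or_nonempty with rfl | hT
  · have h : ∀ ρ : Finpartition (∅ : Finset S), ρ.parts = ∅ := fun ρ =>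
      ρ.parts_eq_empty_iff.2 rfl
    have : Unique (Finpartition (∅ : Finset S)) :=
      inferInstanceAs (Unique (Finpartition (⊥ : Finset S)))
    simp [h, Fintype.card_unique]
  · have h1 : ∀ ρ : Finpartition T, ((-1 : ℤ) ^ ρ.parts.card * ρ.parts.card.factorial) =
        ∑ B ∈ T.powerset.erase ∅, if B ∈ ρ.parts then
          ((-1 : ℤ) ^ ρ.parts.card * (ρ.parts.card - 1).factorial) else 0 := by
      intro ρ
      have hpos : ρ.parts.card ≠ 0 := by
        have := ρ.parts_nonempty hT.ne_empty
        exact this.card_pos.ne'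
      rw [← Finset.sum_filter]
      have : (T.powerset.erase ∅).filter (fun B => B ∈ ρ.parts) = ρ.parts := by
        ext B
        simp only [Finset.mem_filter, Finset.mem_erase, Finset.mem_powerset]
        exact ⟨fun h => h.2, fun h => ⟨⟨ρ.ne_empty h, ρ.subset h⟩, h⟩⟩
      rw [this, Finset.sum_const, nsmul_eq_mul, ← Nat.mul_factorial_pred hpos]
      push_cast
      ring
    rw [Finset.sum_congr rfl (fun ρ _ => h1 ρ), Finset.sum_comm]
    have h2 : ∀ B ∈ T.powerset.erase ∅, (∑ ρ : Finpartition T, if B ∈ ρ.parts then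
          ((-1 : ℤ) ^ ρ.parts.card * (ρ.parts.card - 1).factorial) else 0) =
          -((-1) ^ T.card * (-1) ^ B.card) := by
      intro B hB
      simp only [Finset.mem_erase, Finset.mem_powerset] at hB
      have hBn := Finset.nonempty_iff_ne_empty.2 hB.1
      rw [← Finset.sum_filter, aux_bij T B hBn hB.2
        (fun n => (-1 : ℤ) ^ n * (n - 1).factorial)]
      have := ih (T \ B) (Finset.sdiff_ssubset hB.2 hBn)
      simp only [Nat.add_sub_cancel, pow_succ, mul_neg, mul_one, neg_mul,
        Finset.sum_neg_distrib, this]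
      have hc := Finset.card_sdiff_add_card_eq_card hB.2
      rw [← hc, pow_add, mul_assoc, ← mul_pow]
      simp
    rw [Finset.sum_congr rfl h2, Finset.sum_neg_distrib, ← Finset.mul_sum]
    have h3 := Finset.sum_powerset_neg_one_pow_card_of_nonempty hT
    rw [← Finset.add_sum_erase _ _ (Finset.empty_mem_powerset T)] at h3
    simp only [Finset.card_empty, pow_zero] at h3
    linear_combination (-(-1) ^ T.card) * h3

/-- For a finite set `S` of size `s ≥ 1` and a nonempty subset `C ⊆ S`, the sum
of `μ(ρ, {S}) = (-1)^(#(ρ)-1)·(#(ρ)-1)!` over all set partitions `ρ` of `S`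
having `C` as a block equals `(-1)^(s - |C|)`. -/
theorem stmt_3 {S : Type*} [Fintype S] [DecidableEq S]
    (C : Finset S) (hC : C.Nonempty) :
    (∑ᶠ (ρ : Finpartition (Finset.univ : Finset S)) (_ : C ∈ ρ.parts),
        ((-1 : ℤ) ^ (ρ.parts.card - 1) * (ρ.parts.card - 1).factorial)) =
      (-1) ^ (Fintype.card S - C.card) := by
  have hfin : ∀ s : Finset S, Finite (Finpartition s) := fun s =>
    Finite.of_injective (fun ρ : Finpartition s => ρ.parts) (fun _ _ h => Finpartition.ext h)
  letI : ∀ s : Finset S, Fintype (Finpartition s) := fun s => Fintype.ofFinite _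
  rw [finsum_eq_sum_of_fintype]
  simp only [finsum_eq_if]
  rw [← Finset.sum_filter, aux_bij Finset.univ C hC (Finset.subset_univ _)
    (fun n => (-1 : ℤ) ^ (n - 1) * (n - 1).factorial)]
  simp only [Nat.add_sub_cancel]
  rw [aux_sum, Finset.card_sdiff_of_subset (Finset.subset_univ _), Finset.card_univ]
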